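/- Spectral transference (Theorem 2.2(i), finite-group form): Every eigenvalue of the Lindblad generator 𝓛, viewed as a ℂ-linear map on the d×d complex matrices, is an eigenvalue of the classical generator L, viewed as a ℂ-linear map on ℂ^G. Consequently the smallest nonzero eigenvalue (spectral gap) of 𝓛 is at least the smallest nonzero eigenvalue of L when both spectra are real. -/

import Mathlib

/-!
The matrix coefficients `g ↦ φ ((u g)ᴴ * x * u g)` of conjugation turn a matrix `x` into functions
on `G`. The phases of a projective representation cancel under conjugation, so conjugating first by
`u h` and then by `u g` is conjugating by `u (h * g)`: the matrix coefficients intertwine the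
Lindblad generator with the classical one. Conjugation by a unitary is injective and linear
functionals separate points, so some matrix coefficient of an eigenvector is nonzero, and it is an
eigenvector for the same eigenvalue.
-/

open Matrix

section Eigenvalues

open Module Module.End

lemma hasEigenvector_apply_of_intertwining {K V W : Type*} [CommRing K] [AddCommGroup V]
    [Module K V] [AddCommGroup W] [Module K W] {S : End K V} {T : End K W} {Φ : V →ₗ[K] W}
    (hΦ : T ∘ₗ Φ = Φ ∘ₗ S) {μ : K} {x : V} (hx : S.HasEigenvector μ x) (hΦx : Φ x ≠ 0) :
    T.HasEigenvector μ (Φ x) := by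
  refine hasEigenvector_iff.mpr ⟨mem_eigenspace_iff.mpr ?_, hΦx⟩
  calc T (Φ x) = Φ (S x) := LinearMap.congr_fun hΦ x
    _ = μ • Φ x := by rw [hx.apply_eq_smul, map_smul]

/-- The spectral gap of an operator: its smallest nonzero real eigenvalue. As an infimum in `ℝ` it
takes the junk value `0` when these eigenvalues do not exist or are unbounded below. -/
noncomputable def spectralGap {𝕜 V : Type*} [RCLike 𝕜] [AddCommGroup V] [Module 𝕜 V]
    (T : End 𝕜 V) : ℝ :=
  sInf {r : ℝ | r ≠ 0 ∧ T.HasEigenvalue (r : 𝕜)}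

lemma spectralGap_le_of_hasEigenvalue_imp {𝕜 V W : Type*} [RCLike 𝕜] [AddCommGroup V] [Module 𝕜 V]
    [AddCommGroup W] [Module 𝕜 W] [FiniteDimensional 𝕜 W] {S : End 𝕜 V} {T : End 𝕜 W}
    (hST : ∀ r : ℝ, S.HasEigenvalue (r : 𝕜) → T.HasEigenvalue (r : 𝕜))
    (hS : ∃ r : ℝ, r ≠ 0 ∧ S.HasEigenvalue (r : 𝕜)) :
    spectralGap T ≤ spectralGap S := by
  have hfin : {r : ℝ | T.HasEigenvalue (r : 𝕜)}.Finite :=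
    T.finite_hasEigenvalue.preimage RCLike.ofReal_injective.injOn
  have hbdd : BddBelow {r : ℝ | r ≠ 0 ∧ T.HasEigenvalue (r : 𝕜)} :=
    (hfin.subset fun _ hr => hr.2).bddBelow
  exact csInf_le_csInf hbdd hS fun r hr => ⟨hr.1, hST r hr.2⟩

end Eigenvalues

section MatrixCoefficients

open Module

variable {G K V : Type*} [CommRing K] [AddCommGroup V] [Module K V] {ρ : G → End K V}

/-- The matrix coefficients `g ↦ φ (ρ g x)` of a family of operators `ρ`, as a linear map in the
vector `x`. -/
def matrixCoeff (ρ : G → End K V) (φ : Dual K V) : V →ₗ[K] G → K :=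
  LinearMap.pi fun g => φ ∘ₗ ρ g

lemma matrixCoeff_apply (ρ : G → End K V) (φ : Dual K V) (x : V) (g : G) :
    matrixCoeff ρ φ x g = φ (ρ g x) :=
  rfl

lemma exists_matrixCoeff_ne_zero [Projective K V] {g₀ : G} (hρ : Function.Injective (ρ g₀)) {x : V}
    (hx : x ≠ 0) : ∃ φ : Dual K V, matrixCoeff ρ φ x ≠ 0 := by
  have hρx : ρ g₀ x ≠ 0 := (map_ne_zero_iff (ρ g₀) hρ).mpr hx
  obtain ⟨φ, hφ⟩ := not_forall.mp (mt (forall_dual_apply_eq_zero_iff K (ρ g₀ x)).mp hρx)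
  exact ⟨φ, fun h => hφ (congrFun h g₀)⟩

variable [Mul G] {s : Finset G} {c : G → K} {𝓛 : End K V} {L : End K (G → K)}

lemma comp_matrixCoeff_eq_matrixCoeff_comp (hρ_mul : ∀ h g, ρ (h * g) = ρ g * ρ h)
    (h𝓛 : ∀ x, 𝓛 x = ∑ h ∈ s, c h • (x - ρ h x))
    (hL : ∀ f g, L f g = ∑ h ∈ s, c h * (f g - f (h * g))) (φ : Dual K V) :
    L ∘ₗ matrixCoeff ρ φ = matrixCoeff ρ φ ∘ₗ 𝓛 := by
  refine LinearMap.ext fun x => funext fun g => ?_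
  calc L (matrixCoeff ρ φ x) g
      = ∑ h ∈ s, c h * (φ (ρ g x) - φ (ρ g (ρ h x))) := by
        simp only [hL, matrixCoeff_apply, hρ_mul, End.mul_apply]
    _ = φ (ρ g (𝓛 x)) := by
        simp only [h𝓛, map_sum, map_smul, map_sub, smul_eq_mul]

theorem hasEigenvalue_transference [Projective K V]
    (hρ_mul : ∀ h g, ρ (h * g) = ρ g * ρ h) {g₀ : G} (hρ_inj : Function.Injective (ρ g₀))
    (h𝓛 : ∀ x, 𝓛 x = ∑ h ∈ s, c h • (x - ρ h x))
    (hL : ∀ f g, L f g = ∑ h ∈ s, c h * (f g - f (h * g))) {μ : K} (hμ : 𝓛.HasEigenvalue μ) :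
    L.HasEigenvalue μ := by
  obtain ⟨x, hx⟩ := hμ.exists_hasEigenvector
  obtain ⟨φ, hφ⟩ := exists_matrixCoeff_ne_zero hρ_inj hx.2
  exact End.hasEigenvalue_of_hasEigenvector <|
    hasEigenvector_apply_of_intertwining
      (comp_matrixCoeff_eq_matrixCoeff_comp hρ_mul h𝓛 hL φ) hx hφ

end MatrixCoefficients

section StarConjugation

variable (K : Type*) {A : Type*} [CommRing K] [Ring A] [StarMul A] [Algebra K A]

/-- The conjugation `x ↦ star a * x * a`, i.e. the action of `a` on observables in the Heisenberg
picture. With `star a` on the left it reverses products. -/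
def starConj (a : A) : Module.End K A :=
  LinearMap.mulLeftRight K (star a, a)

lemma starConj_apply (a x : A) : starConj K a x = star a * x * a :=
  LinearMap.mulLeftRight_apply (star a) a x

lemma starConj_mul (a b : A) : starConj K (a * b) = starConj K b * starConj K a :=
  LinearMap.ext fun x => by
    simp only [Module.End.mul_apply, starConj_apply, star_mul, mul_assoc]

lemma starConj_injective {a : A} (ha : IsUnit a) : Function.Injective (starConj K a) := by
  intro x y hxy
  rw [starConj_apply, starConj_apply] at hxy
  exact ha.star.mul_left_cancel (ha.mul_right_cancel hxy)

variable {K}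

lemma starConj_smul_of_mem_unitary [StarMul K] [StarModule K A] {z : K} (hz : z ∈ unitary K)
    (a : A) : starConj K (z • a) = starConj K a :=
  LinearMap.ext fun x => by
    rw [starConj_apply, starConj_apply, star_smul, smul_mul_assoc, smul_mul_smul_comm,
      Unitary.star_mul_self_of_mem hz, one_smul]

end StarConjugation

lemma mem_unitary_of_norm_eq_one {𝕜 : Type*} [RCLike 𝕜] {z : 𝕜} (hz : ‖z‖ = 1) :
    z ∈ unitary 𝕜 := by
  refine Unitary.mem_iff_star_mul_self.mpr ?_
  rw [← starRingEnd_apply, RCLike.conj_mul, hz, RCLike.ofReal_one, one_pow]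

theorem spectral_transference_general {G 𝕜 A : Type*} [Mul G] [RCLike 𝕜] [Ring A] [StarMul A]
    [Algebra 𝕜 A] [StarModule 𝕜 A] {u : G → A} {g₀ : G} (hu_unit : IsUnit (u g₀))
    (hu_proj : ∀ g h, ∃ z : 𝕜, ‖z‖ = 1 ∧ u g * u h = z • u (g * h))
    {s : Finset G} {c : G → 𝕜} {𝓛 : Module.End 𝕜 A}
    (h𝓛 : ∀ x, 𝓛 x = ∑ h ∈ s, c h • (x - star (u h) * x * u h))
    {L : Module.End 𝕜 (G → 𝕜)}
    (hL : ∀ f g, L f g = ∑ h ∈ s, c h * (f g - f (h * g))) :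
    (∀ μ : 𝕜, 𝓛.HasEigenvalue μ → L.HasEigenvalue μ) ∧
    (Finite G → (∃ r : ℝ, r ≠ 0 ∧ 𝓛.HasEigenvalue (r : 𝕜)) → spectralGap L ≤ spectralGap 𝓛) := by
  have hconj_mul (h g : G) :
      starConj 𝕜 (u (h * g)) = starConj 𝕜 (u g) * starConj 𝕜 (u h) := by
    obtain ⟨z, hz, hmul⟩ := hu_proj h g
    rw [← starConj_mul, hmul, starConj_smul_of_mem_unitary (mem_unitary_of_norm_eq_one hz)]
  have heig (μ : 𝕜) : 𝓛.HasEigenvalue μ → L.HasEigenvalue μ :=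
    hasEigenvalue_transference (ρ := fun g => starConj 𝕜 (u g)) hconj_mul
      (starConj_injective 𝕜 hu_unit) (by simpa only [starConj_apply] using h𝓛) hL
  exact ⟨heig, fun _ => spectralGap_le_of_hasEigenvalue_imp fun r => heig r⟩

/-- **Spectral transference.** Every eigenvalue of the transferred Lindblad generator `𝓛`
(as a `ℂ`-linear endomorphism of the `d×d` matrices) is an eigenvalue of the classical
generator `L` (as a `ℂ`-linear endomorphism of `ℂ^G`).  Consequently, when both spectra are
real, the smallest nonzero eigenvalue (spectral gap) of `𝓛` is at least the smallest
nonzero eigenvalue of `L`. -/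
theorem spectral_transference
    {G : Type*} [Group G] [Fintype G]
    {d : ℕ} (u : G → Matrix (Fin d) (Fin d) ℂ)
    (hu_unitary : ∀ g, u g ∈ Matrix.unitaryGroup (Fin d) ℂ)
    (hu_proj : ∀ g h, ∃ c : ℂ, ‖c‖ = 1 ∧ u g * u h = c • u (g * h))
    (c : G → ℝ) (hc : ∀ h, 0 ≤ c h)
    (𝓛 : Module.End ℂ (Matrix (Fin d) (Fin d) ℂ))
    (h𝓛 : ∀ x, 𝓛 x = ∑ h : G, (c h : ℂ) • (x - (u h)ᴴ * x * u h))
    (L : Module.End ℂ (G → ℂ))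
    (hL : ∀ (f : G → ℂ) (g : G), L f g = ∑ h : G, (c h : ℂ) * (f g - f (h * g))) :
    (∀ lam : ℂ, 𝓛.HasEigenvalue lam → L.HasEigenvalue lam) ∧
    ((∀ lam : ℂ, 𝓛.HasEigenvalue lam → ∃ r : ℝ, lam = (r : ℂ)) →
      (∀ lam : ℂ, L.HasEigenvalue lam → ∃ r : ℝ, lam = (r : ℂ)) →
      (∃ r : ℝ, r ≠ 0 ∧ 𝓛.HasEigenvalue (r : ℂ)) →
      sInf {r : ℝ | r ≠ 0 ∧ L.HasEigenvalue (r : ℂ)}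
        ≤ sInf {r : ℝ | r ≠ 0 ∧ 𝓛.HasEigenvalue (r : ℂ)}) := by
  have hu_one : IsUnit (u 1) := (Unitary.toUnits ⟨u 1, hu_unitary 1⟩).isUnit
  exact (spectral_transference_general hu_one hu_proj h𝓛 hL).imp_right
    fun hgap _ _ => hgap inferInstance
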